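/- Consider the LAMB iterates (with β₁ = 0, λ = 0, ε = 0, and β₂ > 0): given x₁ ∈ ℝ^d and v₀ = 0 ∈ ℝ^d, at each step t = 1,…,T draw b i.i.d. samples S_t from P, set g_t = (1/b) Σ_{s∈S_t} ∇ℓ(x_t, s), v_t = β₂ v_{t−1} + (1 − β₂) g_t² (elementwise), r_{t,j} = g_{t,j}/√(v_{t,j}), and update x_{t+1}^{(i)} = x_t^{(i)} − η φ(‖x_t^{(i)}‖) r_t^{(i)}/‖r_t^{(i)}‖ for each block i (assume r_t^{(i)} ≠ 0 almost surely). If every block has dimension d_i = d/h, then √(h(1 − β₂)/(G² d)) · (1/T) Σ_{t=1}^T E‖∇f(x_t)‖² ≤ (f(x₁) − f(x*))/(T η α_l) + α_u ‖σ̃‖₁/(α_l √b) + η α_u² ‖L‖₁/(2 α_l). -/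

import Mathlib

/-!
The proof is a descent argument. The blockwise smoothness of `f` gives the quadratic upper model
`descent`. A LAMB step moves block `i` by at most `η α_u`, which produces the term
`η² α_u² ‖L‖₁ / 2`. In the linear term, coordinate `j` contributes
`-η φ ∇f_j g_j / (√v_j ‖r‖)`. Since `v_j ≤ G²` and `r_j² ≤ 1 / (1 - β₂)`, the factor
`1 / (√v_j ‖r‖)` is at least `c = √(h (1 - β₂) / (G² d))`, so when `g_j` and `∇f_j` have the same
sign the contribution is at most `-η c φ ∇f_j g_j`; when the signs differ, `|∇f_j| ≤ |g_j - ∇f_j|`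
and the contribution is at most `η α_u |g_j - ∇f_j|` (`coord_bound`, `step_descent`). Averaging
over the minibatch, with `E g_j = ∇f_j` and `E |g_j - ∇f_j| ≤ σ̃_j / √b` (`mean_dev`), yields
`η α_l c ‖∇f x‖² + E f(x⁺) ≤ f x + η K` (`expected_descent`), which telescopes.

The scaling `φ` is not assumed measurable, so the iterates need not be measurable functions of all
the samples. For a fixed state, however, one step is bounded by a measurable function of its
minibatch, and the telescoping (`lintegral_orbit_le`) is carried out with lower integrals, which
dominate Bochner integrals of nonnegative functions and satisfy the required half of Tonelli's
theorem without measurability.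
-/

open MeasureTheory Finset

/-- The Euclidean norm of the `i`-th block of `u`, where the coordinates of `ℝ^d`
are partitioned into `h` blocks via the block-assignment map `blk`. -/
noncomputable def blockNorm {d h : ℕ} (blk : Fin d → Fin h) (i : Fin h)
    (u : EuclideanSpace ℝ (Fin d)) : ℝ :=
  Real.sqrt (∑ j ∈ Finset.univ.filter (fun j => blk j = i), u j ^ 2)

open ProbabilityTheory

/-! ### Block norms and the descent lemma -/

lemma blockNorm_nonneg {d h : ℕ} (blk : Fin d → Fin h) (i : Fin h)
    (u : EuclideanSpace ℝ (Fin d)) : 0 ≤ blockNorm blk i u := Real.sqrt_nonneg _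

lemma blockNorm_sq {d h : ℕ} (blk : Fin d → Fin h) (i : Fin h)
    (u : EuclideanSpace ℝ (Fin d)) :
    blockNorm blk i u ^ 2 = ∑ j ∈ Finset.univ.filter (fun j => blk j = i), u j ^ 2 :=
  Real.sq_sqrt (Finset.sum_nonneg fun _ _ => sq_nonneg _)

lemma abs_le_blockNorm {d h : ℕ} (blk : Fin d → Fin h) (j : Fin d)
    (u : EuclideanSpace ℝ (Fin d)) : |u j| ≤ blockNorm blk (blk j) u := by
  refine Real.abs_le_sqrt ?_
  exact Finset.single_le_sum (f := fun j => u j ^ 2) (fun _ _ => sq_nonneg _) (by simp)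

/-- Cauchy–Schwarz on each block. -/
lemma inner_le_sum_blockNorm {d h : ℕ} (blk : Fin d → Fin h)
    (u w : EuclideanSpace ℝ (Fin d)) :
    inner ℝ u w ≤ ∑ i, blockNorm blk i u * blockNorm blk i w := by
  have : inner ℝ u w = ∑ j, u j * w j := by
    simp [PiLp.inner_apply, mul_comm]
  rw [this, ← Finset.sum_fiberwise Finset.univ blk]
  exact Finset.sum_le_sum fun i _ => Real.sum_mul_le_sqrt_mul_sqrt _ _ _

lemma blockNorm_smul {d h : ℕ} (blk : Fin d → Fin h) (i : Fin h) {c : ℝ} (hc : 0 ≤ c)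
    (u : EuclideanSpace ℝ (Fin d)) : blockNorm blk i (c • u) = c * blockNorm blk i u := by
  unfold blockNorm
  simp only [PiLp.smul_apply, smul_eq_mul, mul_pow, ← Finset.mul_sum]
  rw [Real.sqrt_mul (sq_nonneg c), Real.sqrt_sq hc]

/-- Blockwise descent lemma: the quadratic upper model of `f`, obtained by monotonicity of
`s ↦ f (x + s u) - s ⟨∇f x, u⟩ - s² Q` on `[0, 1]`. -/
lemma descent {d h : ℕ} (blk : Fin d → Fin h) (f : EuclideanSpace ℝ (Fin d) → ℝ)
    (hf : Differentiable ℝ f) (L : Fin h → ℝ)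
    (hL : ∀ (y z : EuclideanSpace ℝ (Fin d)) (i : Fin h),
      blockNorm blk i (gradient f y - gradient f z) ≤ L i * blockNorm blk i (y - z))
    (x u : EuclideanSpace ℝ (Fin d)) :
    f (x + u) ≤ f x + inner ℝ (gradient f x) u + ∑ i, L i * blockNorm blk i u ^ 2 / 2 := by
  set Q := ∑ i, L i * blockNorm blk i u ^ 2 / 2 with hQ
  let ψ : ℝ → ℝ := fun s => f (x + s • u) - s * inner ℝ (gradient f x) u - s ^ 2 * Q
  have hder : ∀ s, HasDerivAt ψ
      (inner ℝ (gradient f (x + s • u)) u - inner ℝ (gradient f x) u - 2 * s * Q) s := by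
    intro s
    have h1 : HasDerivAt (fun s : ℝ => x + s • u) u s := by
      simpa using ((hasDerivAt_id s).smul_const u).const_add x
    have h2 := (hf (x + s • u)).hasGradientAt.hasFDerivAt.comp_hasDerivAt s h1
    have h3 := (h2.sub ((hasDerivAt_id s).mul_const (inner ℝ (gradient f x) u))).sub
      ((hasDerivAt_pow 2 s).mul_const Q)
    refine h3.congr_deriv ?_
    simp
  have hanti : AntitoneOn ψ (Set.Icc 0 1) := by
    apply antitoneOn_of_deriv_nonpos (convex_Icc 0 1)
      (fun s _ => (hder s).continuousAt.continuousWithinAt)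
      (fun s _ => (hder s).differentiableAt.differentiableWithinAt)
    intro s hs
    rw [interior_Icc] at hs
    rw [(hder s).deriv, ← inner_sub_left]
    have h1 := inner_le_sum_blockNorm blk (gradient f (x + s • u) - gradient f x) u
    have h2 : ∑ i, blockNorm blk i (gradient f (x + s • u) - gradient f x) * blockNorm blk i u
        ≤ ∑ i, 2 * s * (L i * blockNorm blk i u ^ 2 / 2) := by
      refine Finset.sum_le_sum fun i _ => ?_
      have h3 := hL (x + s • u) x i
      rw [add_sub_cancel_left, blockNorm_smul blk i hs.1.le] at h3
      calc _ ≤ L i * (s * blockNorm blk i u) * blockNorm blk i u :=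
            mul_le_mul_of_nonneg_right h3 (blockNorm_nonneg _ _ _)
        _ = _ := by ring
    rw [← Finset.mul_sum, ← hQ] at h2
    linarith
  have := hanti (Set.left_mem_Icc.2 zero_le_one) (Set.right_mem_Icc.2 zero_le_one) zero_le_one
  simp only [ψ, one_smul, zero_smul, add_zero] at this
  linarith

/-! ### Lower integrals along a random orbit -/

/-- Telescoping along a random orbit. If a single step from any state of the invariant set `I`
satisfies `A y + E F(step y) ≤ F y + K`, then `E ∑_{t < T} A(z t) ≤ F y + T K`. No measurability of
`step`, `F` or `A` is assumed: `∫⁻` is the lower integral, and a lower integral over a product is at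
most the iterated one. The induction on `T` splits off the first sample. -/
lemma lintegral_orbit_le {Ω X : Type*} [MeasurableSpace Ω] (Q : Measure Ω)
    [IsProbabilityMeasure Q] (step : X → Ω → X) (I : Set X) (F A : X → ENNReal) (K : ENNReal)
    (hI : ∀ y ∈ I, ∀ w, step y w ∈ I)
    (hstep : ∀ y ∈ I, A y + ∫⁻ w, F (step y w) ∂Q ≤ F y + K) (T : ℕ) :
    ∀ (z : ℕ → (Fin T → Ω) → X) (y : X), y ∈ I → (∀ ω, z 0 ω = y) →
      (∀ (t : Fin T) ω, z (t + 1) ω = step (z t ω) (ω t)) →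
      ∫⁻ ω, ∑ t ∈ Finset.range T, A (z t ω) ∂(Measure.pi fun _ : Fin T => Q) ≤ F y + T * K := by
  induction T with
  | zero => intro z y _ _ _; simp
  | succ T ih =>
    intro z y hy h0 hz
    have hmp := (measurePreserving_piFinSuccAbove (fun _ : Fin (T + 1) => Q) 0).symm
    rw [hmp.lintegral_map_equiv]
    refine (lintegral_prod_le _).trans ?_
    have key : ∀ w : Ω, ∫⁻ ω : Fin T → Ω, ∑ t ∈ Finset.range (T + 1),
        A (z t ((MeasurableEquiv.piFinSuccAbove (fun _ : Fin (T + 1) => Ω) 0).symm (w, ω)))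
          ∂(Measure.pi fun _ : Fin T => Q) ≤ A y + (F (step y w) + T * K) := by
      intro w
      simp only [Finset.sum_range_succ', h0]
      rw [lintegral_add_right _ measurable_const, lintegral_const, measure_univ, mul_one, add_comm]
      gcongr
      refine ih (fun t ω => z (t + 1) _) (step y w) (hI y hy w) ?_ ?_
      · intro ω
        have := hz 0 ((MeasurableEquiv.piFinSuccAbove (fun _ : Fin (T + 1) => Ω) 0).symm (w, ω))
        simpa [h0] using this
      · intro t ω
        have := hz t.succ ((MeasurableEquiv.piFinSuccAbove (fun _ : Fin (T + 1) => Ω) 0).symm (w, ω))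
        simpa using this
    refine (lintegral_mono key).trans ?_
    rw [lintegral_add_left measurable_const, lintegral_add_right _ measurable_const]
    simp only [lintegral_const, measure_univ, mul_one]
    calc A y + (∫⁻ w, F (step y w) ∂Q + T * K) = (A y + ∫⁻ w, F (step y w) ∂Q) + T * K := by ring
      _ ≤ (F y + K) + T * K := by exact add_le_add_left (hstep y hy) _
      _ = _ := by push_cast; ring

/-- Bochner integrals of nonnegative functions are at most lower integrals (a nonintegrable
function has Bochner integral `0`), and lower integrals are superadditive. -/
lemma sum_integral_le_lintegral {Ω : Type*} [MeasurableSpace Ω] (μ : Measure Ω)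
    (A : ℕ → Ω → ℝ) (hA : ∀ t ω, 0 ≤ A t ω) (T : ℕ) :
    ENNReal.ofReal (∑ t ∈ Finset.range T, ∫ ω, A t ω ∂μ)
      ≤ ∫⁻ ω, ∑ t ∈ Finset.range T, ENNReal.ofReal (A t ω) ∂μ := by
  induction T with
  | zero => simp
  | succ T ih =>
    simp only [Finset.sum_range_succ]
    refine ENNReal.ofReal_add_le.trans ((add_le_add ih ?_).trans (le_lintegral_add _ _))
    by_cases hi : Integrable (A T) μ
    · exact (ofReal_integral_eq_lintegral_ofReal hi (.of_forall (hA T))).le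
    · simp [integral_undef hi]

/-! ### Minibatch averages -/

/-- The mean of `b` i.i.d. copies of `X` is unbiased, and its mean absolute deviation is at most
`σ / √b`, by additivity of variances and Jensen's inequality. -/
lemma mean_dev {S : Type*} [MeasurableSpace S] (P : Measure S) [IsProbabilityMeasure P]
    (X : S → ℝ) (hX : Measurable X) (G : ℝ) (hG : ∀ s, |X s| ≤ G) (σ : ℝ) (hσ : 0 ≤ σ)
    (m : ℝ) (hm : m = ∫ s, X s ∂P) (hvar : ∫ s, (X s - m) ^ 2 ∂P ≤ σ ^ 2) (b : ℕ) (hb : 0 < b) :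
    Integrable (fun w : Fin b → S => (b : ℝ)⁻¹ * ∑ k, X (w k)) (Measure.pi fun _ => P) ∧
    ∫ w : Fin b → S, (b : ℝ)⁻¹ * ∑ k, X (w k) ∂(Measure.pi fun _ => P) = m ∧
    ∫ w : Fin b → S, |(b : ℝ)⁻¹ * ∑ k, X (w k) - m| ∂(Measure.pi fun _ => P) ≤ σ / Real.sqrt b := by
  have hXL : MemLp X 2 P := MemLp.of_bound hX.aestronglyMeasurable G (.of_forall hG)
  have hXi : Integrable X P := hXL.integrable one_le_two
  have hb' : (0 : ℝ) < b := by exact_mod_cast hb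
  set μ : Measure (Fin b → S) := Measure.pi fun _ => P with hμ
  have hev : ∀ k : Fin b, MeasurePreserving (fun w : Fin b → S => w k) μ P :=
    fun k => measurePreserving_eval (fun _ : Fin b => P) k
  have hLk : ∀ k : Fin b, MemLp (fun w : Fin b → S => X (w k)) 2 μ :=
    fun k => hXL.comp_measurePreserving (hev k)
  have hLM : MemLp (fun w : Fin b → S => (b : ℝ)⁻¹ * ∑ k, X (w k)) 2 μ :=
    (memLp_finsetSum _ fun k _ => hLk k).const_mul _
  have hint : ∫ w : Fin b → S, (b : ℝ)⁻¹ * ∑ k, X (w k) ∂μ = m := by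
    rw [integral_const_mul, integral_finsetSum _ fun k _ => (hLk k).integrable one_le_two]
    have : ∀ k : Fin b, ∫ w : Fin b → S, X (w k) ∂μ = m := fun k => by
      rw [hm, ← (hev k).map_eq, integral_map (hev k).measurable.aemeasurable]
      rw [(hev k).map_eq]; exact hX.aestronglyMeasurable
    simp [this]; field_simp
  refine ⟨hLM.integrable one_le_two, hint, ?_⟩
  have hv1 : Var[fun w : Fin b → S => (b : ℝ)⁻¹ * ∑ k, X (w k); μ] ≤ σ ^ 2 / b := by
    rw [variance_const_mul]
    have h2 := variance_sum_pi (μ := fun _ : Fin b => P) (X := fun _ => X) (fun _ => hXL)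
    have h3 : (∑ i : Fin b, fun ω : Fin b → S => X (ω i)) = fun w => ∑ k, X (w k) := by
      ext w; simp
    rw [h3] at h2
    rw [h2, variance_eq_integral hX.aemeasurable, ← hm]
    simp only [Finset.sum_const, Finset.card_univ, Fintype.card_fin, nsmul_eq_mul]
    calc _ = (∫ s, (X s - m) ^ 2 ∂P) / b := by field_simp
      _ ≤ _ := by gcongr
  have hLD : MemLp (fun w : Fin b → S => |(b : ℝ)⁻¹ * ∑ k, X (w k) - m|) 2 μ :=
    (hLM.sub (memLp_const m)).norm
  have h4 := variance_nonneg (fun w : Fin b → S => |(b : ℝ)⁻¹ * ∑ k, X (w k) - m|) μ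
  rw [variance_eq_sub hLD] at h4
  rw [variance_eq_integral hLM.aemeasurable, hint] at hv1
  simp only [Pi.pow_apply, sq_abs] at h4
  have h5 : (∫ w : Fin b → S, |(b : ℝ)⁻¹ * ∑ k, X (w k) - m| ∂μ) ^ 2 ≤ (σ / Real.sqrt b) ^ 2 := by
    rw [div_pow, Real.sq_sqrt hb'.le]; linarith
  exact (abs_le_of_sq_le_sq' h5 (by positivity)).2

/-! ### One LAMB step -/

/-- Contribution of one coordinate, with `a` the true and `g` the stochastic partial derivative.
If `a g ≥ 0`, then `1 / (√v N) ≥ c` gives the first term. If `a g < 0`, then `|a| ≤ |g - a|`, which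
replaces the usual estimate of the probability of a wrong sign. -/
lemma coord_bound (a g v N c φ αu : ℝ) (hc : 0 ≤ c) (hφ : 0 ≤ φ) (hφu : φ ≤ αu)
    (hgv : g ≠ 0 → 0 < v) (hN : |g / Real.sqrt v| ≤ N)
    (hcN : c * (Real.sqrt v * N) ≤ 1) :
    -(a * (φ * (g / Real.sqrt v) / N)) ≤ -(c * φ * (a * g)) + αu * |g - a| := by
  have hu : 0 ≤ αu := hφ.trans hφu
  rcases le_or_gt 0 (a * g) with h | h
  · have h0 : 0 ≤ αu * |g - a| := by positivity
    suffices c * φ * (a * g) ≤ a * (φ * (g / Real.sqrt v) / N) by linarith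
    by_cases hg : g = 0
    · simp [hg]
    have hv := Real.sqrt_pos.2 (hgv hg)
    have hNp : 0 < N := lt_of_lt_of_le (abs_pos.2 (div_ne_zero hg hv.ne')) hN
    have hc' : c ≤ 1 / (Real.sqrt v * N) := by rw [le_div_iff₀ (by positivity)]; exact hcN
    calc c * φ * (a * g) = c * (φ * (a * g)) := by ring
      _ ≤ 1 / (Real.sqrt v * N) * (φ * (a * g)) := by gcongr
      _ = _ := by field_simp
  · have h1 : 0 ≤ -(c * φ * (a * g)) := by
      have : 0 ≤ c * φ * (-(a * g)) := mul_nonneg (by positivity) (by linarith)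
      linarith
    have h2 : |a| ≤ |g - a| := by
      apply sq_le_sq.1
      nlinarith
    have h3 : |(g / Real.sqrt v) / N| ≤ 1 := by
      have hN0 : 0 ≤ N := (abs_nonneg _).trans hN
      rw [abs_div, abs_of_nonneg hN0]
      exact div_le_one_of_le₀ hN hN0
    have h4 : -(a * (φ * (g / Real.sqrt v) / N)) ≤ αu * |g - a| := by
      calc -(a * (φ * (g / Real.sqrt v) / N)) ≤ |a * (φ * (g / Real.sqrt v) / N)| := neg_le_abs _
        _ = φ * |a| * |(g / Real.sqrt v) / N| := by
          rw [mul_div_assoc, abs_mul, abs_mul, abs_of_nonneg hφ]; ring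
        _ ≤ αu * |g - a| * 1 := by gcongr
        _ = _ := mul_one _
    linarith

/-- If `√v ≤ G` and `N ≤ √(D / (1 - β))`, then `c` is at most the effective step scale
`1 / (√v N)` (in product form, so that a vanishing `v` or `N` is harmless). -/
lemma scale_bound {c G β D v N : ℝ} (hc : c ^ 2 * (G ^ 2 * (D / (1 - β))) ≤ 1)
    (hv0 : 0 ≤ v) (hv : v ≤ G ^ 2) (hN : N ^ 2 ≤ D / (1 - β)) :
    c * (Real.sqrt v * N) ≤ 1 := by
  have h1 : (c * (Real.sqrt v * N)) ^ 2 ≤ 1 := by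
    calc (c * (Real.sqrt v * N)) ^ 2 = c ^ 2 * (v * N ^ 2) := by
          rw [mul_pow, mul_pow, Real.sq_sqrt hv0]
      _ ≤ c ^ 2 * (G ^ 2 * (D / (1 - β))) := by gcongr
      _ ≤ 1 := hc
  exact (abs_le.1 ((sq_le_one_iff_abs_le_one _).1 h1)).2

/-- Pathwise one-step descent for LAMB. The vectors `g`, `v`, `r` are the minibatch gradient, the
updated second moment and the ratio at the current iterate `x`; `D` bounds the block dimensions.
The hypothesis `hc` is only needed when there is a coordinate, hence its `Fin d` argument. -/
lemma step_descent {d h : ℕ} (blk : Fin d → Fin h)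
    (f : EuclideanSpace ℝ (Fin d) → ℝ) (hf : Differentiable ℝ f)
    (L : Fin h → ℝ) (hL0 : ∀ i, 0 ≤ L i)
    (hL : ∀ (y z : EuclideanSpace ℝ (Fin d)) (i : Fin h),
      blockNorm blk i (gradient f y - gradient f z) ≤ L i * blockNorm blk i (y - z))
    (φ : Fin h → ℝ) (αu : ℝ) (hφ : ∀ i, 0 ≤ φ i ∧ φ i ≤ αu)
    (G β D c η : ℝ) (hβ : β < 1) (hβ0 : 0 < β) (hη : 0 < η) (hc0 : 0 ≤ c)
    (hcard : ∀ i, ((Finset.univ.filter (fun j => blk j = i)).card : ℝ) ≤ D)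
    (hc : ∀ _ : Fin d, c ^ 2 * (G ^ 2 * (D / (1 - β))) ≤ 1)
    (x x' g r : EuclideanSpace ℝ (Fin d)) (v₀ v : Fin d → ℝ)
    (hv₀ : ∀ j, 0 ≤ v₀ j) (hvG : ∀ j, v j ≤ G ^ 2)
    (hv : ∀ j, v j = β * v₀ j + (1 - β) * g j ^ 2)
    (hr : ∀ j, r j = g j / Real.sqrt (v j))
    (hx' : ∀ j, x' j = x j - η * φ (blk j) * r j / blockNorm blk (blk j) r) :
    f x' ≤ f x + η * ∑ j, (-(c * φ (blk j) * (gradient f x j * g j))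
        + αu * |g j - gradient f x j|) + η ^ 2 * αu ^ 2 * (∑ i, L i) / 2 := by
  have hβ1 : 0 < 1 - β := by linarith
  have hv0 : ∀ j, 0 ≤ v j := fun j => by
    rw [hv]; have := hv₀ j; positivity
  have hgv : ∀ j, (1 - β) * g j ^ 2 ≤ v j := fun j => by
    rw [hv]; have := mul_nonneg hβ0.le (hv₀ j); linarith
  have hr2 : ∀ j, r j ^ 2 ≤ 1 / (1 - β) := fun j => by
    rw [hr, div_pow, Real.sq_sqrt (hv0 j)]
    refine div_le_of_le_mul₀ (hv0 j) (by positivity) ?_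
    rw [one_div, ← div_eq_inv_mul, le_div_iff₀ hβ1]
    linarith [hgv j]
  have hN : ∀ i, blockNorm blk i r ^ 2 ≤ D / (1 - β) := fun i => by
    rw [blockNorm_sq]
    refine (Finset.sum_le_card_nsmul _ _ _ fun j _ => hr2 j).trans ?_
    rw [nsmul_eq_mul, ← div_eq_mul_one_div]
    gcongr
    exact hcard i
  have hdes := descent blk f hf L hL x (x' - x)
  rw [add_sub_cancel] at hdes
  have hu : ∀ j, (x' - x) j = -(η * (φ (blk j) * r j / blockNorm blk (blk j) r)) := fun j => by
    rw [PiLp.sub_apply, hx']; ring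
  have h1 : inner ℝ (gradient f x) (x' - x)
      ≤ η * ∑ j, (-(c * φ (blk j) * (gradient f x j * g j)) + αu * |g j - gradient f x j|) := by
    have : inner ℝ (gradient f x) (x' - x)
        = η * ∑ j, -(gradient f x j * (φ (blk j) * r j / blockNorm blk (blk j) r)) := by
      rw [Finset.mul_sum, PiLp.inner_apply]
      refine Finset.sum_congr rfl fun j _ => ?_
      rw [hu]; simp; ring
    rw [this]
    refine mul_le_mul_of_nonneg_left (Finset.sum_le_sum fun j _ => ?_) hη.le
    rw [hr]
    refine coord_bound _ _ _ _ c _ αu hc0 (hφ _).1 (hφ _).2 ?_ ?_ ?_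
    · intro hg
      exact lt_of_lt_of_le (by positivity) (hgv j)
    · rw [← hr]; exact abs_le_blockNorm blk j r
    · exact scale_bound (hc j) (hv0 j) (hvG j) (hN _)
  have h2 : ∀ i, blockNorm blk i (x' - x) ^ 2 ≤ η ^ 2 * αu ^ 2 := fun i => by
    have : blockNorm blk i (x' - x) ^ 2
        = (η * φ i) ^ 2 * (blockNorm blk i r ^ 2 / blockNorm blk i r ^ 2) := by
      rw [blockNorm_sq]
      nth_rewrite 1 [blockNorm_sq]
      rw [Finset.sum_div, Finset.mul_sum]
      refine Finset.sum_congr rfl fun j hj => ?_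
      rw [hu, (Finset.mem_filter.1 hj).2]; ring
    rw [this, ← mul_pow]
    have h3 : (η * φ i) ^ 2 ≤ (η * αu) ^ 2 := by
      have := hφ i
      have := this.1
      gcongr
      exact (hφ i).2
    calc _ ≤ (η * φ i) ^ 2 * 1 := by gcongr; exact div_self_le_one _
      _ ≤ _ := by rwa [mul_one]
  have h3 : ∑ i, L i * blockNorm blk i (x' - x) ^ 2 / 2 ≤ η ^ 2 * αu ^ 2 * (∑ i, L i) / 2 := by
    rw [Finset.mul_sum, Finset.sum_div]
    refine Finset.sum_le_sum fun i _ => ?_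
    have := mul_le_mul_of_nonneg_left (h2 i) (hL0 i)
    linarith
  linarith

/-- One LAMB step on the state (iterate, second moment), for the stochastic gradient `gr` and the
minibatch `w`. A quotient with zero denominator is `0`. -/
noncomputable def lambStep {d h : ℕ} {B : Type*} (blk : Fin d → Fin h)
    (gr : EuclideanSpace ℝ (Fin d) → B → EuclideanSpace ℝ (Fin d)) (φ : ℝ → ℝ) (β η : ℝ)
    (y : EuclideanSpace ℝ (Fin d) × (Fin d → ℝ)) (w : B) :
    EuclideanSpace ℝ (Fin d) × (Fin d → ℝ) :=
  let v : Fin d → ℝ := fun j => β * y.2 j + (1 - β) * gr y.1 w j ^ 2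
  let r : EuclideanSpace ℝ (Fin d) := WithLp.toLp 2 fun j => gr y.1 w j / Real.sqrt (v j)
  (WithLp.toLp 2 fun j =>
    y.1 j - η * φ (blockNorm blk (blk j) y.1) * r j / blockNorm blk (blk j) r, v)

/-- Integrating the pathwise descent over one minibatch, from a fixed state: `g` is an unbiased
estimator of `a` whose mean absolute deviations are at most `σ j / τ`. Only the majorant of `F` has
to be measurable, not `F` itself. -/
lemma expected_descent {d : ℕ} {B : Type*} [MeasurableSpace B] (Q : Measure B)
    [IsProbabilityMeasure Q] (F : B → ℝ) (hF : ∀ w, 0 ≤ F w) (F₀ : ℝ) (hF₀ : 0 ≤ F₀)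
    (a : EuclideanSpace ℝ (Fin d))
    (g : B → EuclideanSpace ℝ (Fin d)) (φ : Fin d → ℝ) (αl αu c η τ M : ℝ) (σ : Fin d → ℝ)
    (hφ : ∀ j, αl ≤ φ j) (hαl : 0 ≤ αl) (hαu : 0 ≤ αu) (hc : 0 ≤ c) (hη : 0 ≤ η)
    (hM : 0 ≤ αu * (∑ j, σ j) / τ + η * M)
    (hgi : ∀ j, Integrable (fun w => g w j) Q) (hga : ∀ j, ∫ w, g w j ∂Q = a j)
    (hgσ : ∀ j, ∫ w, |g w j - a j| ∂Q ≤ σ j / τ)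
    (hdes : ∀ w, F w ≤ F₀ + η * ∑ j, (-(c * φ j * (a j * g w j)) + αu * |g w j - a j|)
      + η ^ 2 * M) :
    ENNReal.ofReal (η * αl * c * ‖a‖ ^ 2) + ∫⁻ w, ENNReal.ofReal (F w) ∂Q
      ≤ ENNReal.ofReal F₀ + ENNReal.ofReal (η * (αu * (∑ j, σ j) / τ + η * M)) := by
  have hi1 : ∀ j, Integrable (fun w => -(c * φ j * (a j * g w j))) Q :=
    fun j => (((hgi j).const_mul _).const_mul _).neg
  have hi2 : ∀ j, Integrable (fun w => αu * |g w j - a j|) Q :=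
    fun j => (((hgi j).sub (integrable_const _)).abs).const_mul _
  have hi12 : ∀ j, Integrable (fun w => -(c * φ j * (a j * g w j)) + αu * |g w j - a j|) Q :=
    fun j => (hi1 j).add (hi2 j)
  have hi3 : Integrable (fun w => ∑ j, (-(c * φ j * (a j * g w j)) + αu * |g w j - a j|)) Q :=
    integrable_finsetSum _ fun j _ => hi12 j
  have hi4 : Integrable (fun w => F₀ + η * ∑ j, (-(c * φ j * (a j * g w j)) + αu * |g w j - a j|)
      + η ^ 2 * M) Q :=
    ((integrable_const _).add (hi3.const_mul _)).add (integrable_const _)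
  have hi5 : Integrable
      (fun w => F₀ + η * ∑ j, (-(c * φ j * (a j * g w j)) + αu * |g w j - a j|)) Q :=
    (integrable_const _).add (hi3.const_mul _)
  have hint : ∫ w, (F₀ + η * ∑ j, (-(c * φ j * (a j * g w j)) + αu * |g w j - a j|)
      + η ^ 2 * M) ∂Q ≤ F₀ + η * (-(αl * c * ‖a‖ ^ 2) + αu * (∑ j, σ j) / τ) + η ^ 2 * M := by
    rw [integral_add hi5 (integrable_const _),
      integral_add (integrable_const _) (hi3.const_mul _), integral_const_mul,
      integral_finsetSum _ fun j _ => hi12 j]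
    simp only [integral_const, probReal_univ, smul_eq_mul, one_mul]
    gcongr
    rw [EuclideanSpace.real_norm_sq_eq, Finset.mul_sum, ← Finset.sum_neg_distrib, Finset.mul_sum,
      Finset.sum_div, ← Finset.sum_add_distrib]
    refine Finset.sum_le_sum fun j _ => ?_
    rw [integral_add (hi1 j) (hi2 j), integral_neg, integral_const_mul, integral_const_mul,
      integral_const_mul, hga]
    have h1 : αl * c * a j ^ 2 ≤ c * φ j * (a j * a j) := by
      calc αl * c * a j ^ 2 ≤ φ j * c * a j ^ 2 := by gcongr; exact hφ j
        _ = _ := by ring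
    have h2 := mul_le_mul_of_nonneg_left (hgσ j) hαu
    rw [← mul_div_assoc] at h2
    linarith
  have hR0 : ∀ w, 0 ≤ F₀ + η * ∑ j, (-(c * φ j * (a j * g w j)) + αu * |g w j - a j|)
      + η ^ 2 * M := fun w => (hF w).trans (hdes w)
  have hle : ∫⁻ w, ENNReal.ofReal (F w) ∂Q ≤ ENNReal.ofReal (∫ w, (F₀ + η *
      ∑ j, (-(c * φ j * (a j * g w j)) + αu * |g w j - a j|) + η ^ 2 * M) ∂Q) := by
    rw [ofReal_integral_eq_lintegral_ofReal hi4 (.of_forall hR0)]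
    exact lintegral_mono fun w => ENNReal.ofReal_le_ofReal (hdes w)
  refine (add_le_add_right hle _).trans ?_
  rw [← ENNReal.ofReal_add (by positivity) (integral_nonneg hR0),
    ← ENNReal.ofReal_add hF₀ (by positivity)]
  refine ENNReal.ofReal_le_ofReal ?_
  calc _ ≤ η * αl * c * ‖a‖ ^ 2
        + (F₀ + η * (-(αl * c * ‖a‖ ^ 2) + αu * (∑ j, σ j) / τ) + η ^ 2 * M) := by gcongr
    _ = _ := by ring

/-! ### The convergence bound -/

/-- LAMB iterates (β₁ = 0, λ = 0, ε = 0, β₂ > 0): starting from `x 0 = x₁`, `v 0 = 0`,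
at each step `t = 0, …, T-1` (the paper's steps `1, …, T`) a fresh minibatch of `b` i.i.d.
samples (the `t`-th row of `ω : Fin T → Fin b → S`, distributed by the product measure)
gives `g t`, `v (t+1) = β₂ v t + (1-β₂) (g t)²`, `r t = g t/√(v (t+1))`, and the
layerwise-normalized update gives `x (t+1)`. If all blocks have dimension `d/h` then
`√(h(1-β₂)/(G² d)) (1/T) Σ_t E‖∇f (x t)‖²
  ≤ (f x₁ - f x*)/(T η α_l) + α_u ‖σ̃‖₁/(α_l √b) + η α_u² ‖L‖₁/(2 α_l)`. -/
theorem stmt11 {d h : ℕ} (hdvd : h ∣ d) (blk : Fin d → Fin h)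
    (hcard : ∀ i : Fin h, (Finset.univ.filter (fun j => blk j = i)).card = d / h)
    {S : Type*} [MeasurableSpace S] (P : Measure S) [IsProbabilityMeasure P]
    (ℓ : EuclideanSpace ℝ (Fin d) → S → ℝ)
    (f : EuclideanSpace ℝ (Fin d) → ℝ)
    (hldiff : ∀ s, Differentiable ℝ (fun y => ℓ y s))
    (hfdiff : Differentiable ℝ f)
    (hf : ∀ y, f y = ∫ s, ℓ y s ∂P)
    (hlint : ∀ y, Integrable (fun s => ℓ y s) P)
    (hgradmeas : ∀ y, Measurable (fun s => gradient (fun z => ℓ z s) y))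
    (hgradint : ∀ y, Integrable (fun s => gradient (fun z => ℓ z s) y) P)
    (hgrad : ∀ y, gradient f y = ∫ s, gradient (fun z => ℓ z s) y ∂P)
    (lowbd : EuclideanSpace ℝ (Fin d)) (hlow : ∀ y, f lowbd ≤ f y)
    (L : Fin h → ℝ)
    (hsmooth : ∀ (s : S) (y z : EuclideanSpace ℝ (Fin d)) (i : Fin h),
      blockNorm blk i (gradient (fun w => ℓ w s) y - gradient (fun w => ℓ w s) z)
        ≤ L i * blockNorm blk i (y - z))
    (hsmoothf : ∀ (y z : EuclideanSpace ℝ (Fin d)) (i : Fin h),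
      blockNorm blk i (gradient f y - gradient f z) ≤ L i * blockNorm blk i (y - z))
    (G : ℝ) (hG : 0 < G)
    (hGbd : ∀ (y : EuclideanSpace ℝ (Fin d)) (s : S) (j : Fin d),
      |gradient (fun z => ℓ z s) y j| ≤ G)
    (σt : Fin d → ℝ) (hσt : ∀ j, 0 ≤ σt j)
    (hvar : ∀ (y : EuclideanSpace ℝ (Fin d)) (j : Fin d),
      ∫ s, (gradient (fun z => ℓ z s) y j - gradient f y j) ^ 2 ∂P ≤ σt j ^ 2)
    (φ : ℝ → ℝ) (αl αu : ℝ) (hαl : 0 < αl)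
    (hφ : ∀ v, 0 ≤ v → αl ≤ φ v ∧ φ v ≤ αu)
    (β₂ : ℝ) (hβ₂0 : 0 < β₂) (hβ₂1 : β₂ < 1)
    (η : ℝ) (hη : 0 < η)
    (T b : ℕ) (hT : 0 < T) (hb : 0 < b)
    (x₁ : EuclideanSpace ℝ (Fin d))
    (x : ℕ → (Fin T → Fin b → S) → EuclideanSpace ℝ (Fin d))
    (g : Fin T → (Fin T → Fin b → S) → EuclideanSpace ℝ (Fin d))
    (v : ℕ → (Fin T → Fin b → S) → Fin d → ℝ)
    (r : Fin T → (Fin T → Fin b → S) → EuclideanSpace ℝ (Fin d))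
    (hx0 : ∀ ω, x 0 ω = x₁)
    (hv0 : ∀ ω j, v 0 ω j = 0)
    (hg : ∀ (t : Fin T) ω,
      g t ω = (b : ℝ)⁻¹ • ∑ m : Fin b, gradient (fun z => ℓ z (ω t m)) (x t ω))
    (hvrec : ∀ (t : Fin T) ω (j : Fin d),
      v ((t : ℕ) + 1) ω j = β₂ * v t ω j + (1 - β₂) * (g t ω j) ^ 2)
    (hr : ∀ (t : Fin T) ω (j : Fin d),
      r t ω j = g t ω j / Real.sqrt (v ((t : ℕ) + 1) ω j))
    (hrne : ∀ᵐ ω ∂(Measure.pi fun _ : Fin T => Measure.pi fun _ : Fin b => P),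
      ∀ (t : Fin T) (i : Fin h), blockNorm blk i (r t ω) ≠ 0)
    (hupd : ∀ (t : Fin T) ω (j : Fin d),
      x ((t : ℕ) + 1) ω j
        = x t ω j - η * φ (blockNorm blk (blk j) (x t ω)) * r t ω j
            / blockNorm blk (blk j) (r t ω)) :
    Real.sqrt (h * (1 - β₂) / (G ^ 2 * d))
        * ((T : ℝ)⁻¹ * ∑ t ∈ Finset.range T,
            ∫ ω, ‖gradient f (x t ω)‖ ^ 2
              ∂(Measure.pi fun _ : Fin T => Measure.pi fun _ : Fin b => P))
      ≤ (f x₁ - f lowbd) / (T * η * αl)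
        + αu * (∑ j, σt j) / (αl * Real.sqrt b)
        + η * αu ^ 2 * (∑ i, L i) / (2 * αl) := by
  have hT' : (0 : ℝ) < T := by exact_mod_cast hT
  have hb' : (0 : ℝ) < b := by exact_mod_cast hb
  have hβ1 : 0 < 1 - β₂ := by linarith
  have hαu : 0 ≤ αu := hαl.le.trans ((hφ 0 le_rfl).1.trans (hφ 0 le_rfl).2)
  -- `L i` is nonnegative because its block is nonempty: an empty block has norm `0`,
  -- which `hrne` excludes.
  have hL0 : ∀ i, 0 ≤ L i := by
    intro i
    obtain ⟨ω, hω⟩ := hrne.exists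
    have hne := hω ⟨0, hT⟩ i
    have hp := (blockNorm_nonneg blk i (r ⟨0, hT⟩ ω)).lt_of_ne' hne
    have := (blockNorm_nonneg _ _ _).trans (hsmoothf (r ⟨0, hT⟩ ω) 0 i)
    rw [sub_zero] at this
    exact nonneg_of_mul_nonneg_left this hp
  set c := Real.sqrt (h * (1 - β₂) / (G ^ 2 * d)) with hc
  have hc0 : 0 ≤ c := Real.sqrt_nonneg _
  -- `Fin d` is the hypothesis `0 < d`: the junk value of `c` at `d = 0` is never used.
  have hcD : ∀ _ : Fin d, c ^ 2 * (G ^ 2 * (((d / h : ℕ) : ℝ) / (1 - β₂))) ≤ 1 := by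
    intro j
    have hd : (0 : ℝ) < d := by exact_mod_cast j.pos
    have hh : (0 : ℝ) < h := by exact_mod_cast (blk j).pos
    rw [Nat.cast_div hdvd hh.ne', hc, Real.sq_sqrt (by positivity)]
    apply le_of_eq
    field_simp
  let gr : EuclideanSpace ℝ (Fin d) → (Fin b → S) → EuclideanSpace ℝ (Fin d) := fun y w =>
    (b : ℝ)⁻¹ • ∑ m : Fin b, gradient (fun z => ℓ z (w m)) y
  have hgr : ∀ y w j, gr y w j = (b : ℝ)⁻¹ * ∑ m : Fin b, gradient (fun z => ℓ z (w m)) y j := by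
    intro y w j
    simp [gr]
  have hgrG : ∀ y w j, gr y w j ^ 2 ≤ G ^ 2 := by
    intro y w j
    rw [← sq_abs]
    gcongr
    rw [hgr, abs_mul, abs_of_pos (inv_pos.2 hb'), inv_mul_le_iff₀ hb']
    refine (Finset.abs_sum_le_sum_abs _ _).trans ?_
    refine (Finset.sum_le_card_nsmul _ _ _ fun m _ => hGbd y (w m) j).trans ?_
    simp
  -- Along the orbit every second-moment entry stays in `[0, G²]`.
  let I : Set (EuclideanSpace ℝ (Fin d) × (Fin d → ℝ)) :=
    {y | ∀ j, 0 ≤ y.2 j ∧ y.2 j ≤ G ^ 2}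
  have hvG : ∀ y ∈ I, ∀ w j, 0 ≤ β₂ * y.2 j + (1 - β₂) * gr y.1 w j ^ 2 ∧
      β₂ * y.2 j + (1 - β₂) * gr y.1 w j ^ 2 ≤ G ^ 2 := by
    intro y hy w j
    have h1 := (hy j).1
    refine ⟨by positivity, ?_⟩
    nlinarith [mul_le_mul_of_nonneg_left (hy j).2 hβ₂0.le,
      mul_le_mul_of_nonneg_left (hgrG y.1 w j) hβ1.le]
  set K : ℝ := αu * (∑ j, σt j) / Real.sqrt b + η * (αu ^ 2 * (∑ i, L i) / 2) with hK
  have hK0 : 0 ≤ K := by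
    have h1 : 0 ≤ ∑ j, σt j := Finset.sum_nonneg fun j _ => hσt j
    have h2 : 0 ≤ ∑ i, L i := Finset.sum_nonneg fun i _ => hL0 i
    positivity
  -- The scaling `φ` need not be measurable, so the telescoping is done with lower integrals.
  have horb := lintegral_orbit_le (Measure.pi fun _ : Fin b => P)
    (lambStep blk gr φ β₂ η) I (fun y => ENNReal.ofReal (f y.1 - f lowbd))
    (fun y => ENNReal.ofReal (η * αl * c * ‖gradient f y.1‖ ^ 2)) (ENNReal.ofReal (η * K))
    (fun y hy w j => hvG y hy w j) ?_ T (fun t ω => (x t ω, v t ω)) (x₁, 0) ?_ ?_ ?_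
  · have h1 := (sum_integral_le_lintegral _
      (fun t ω => η * αl * c * ‖gradient f (x t ω)‖ ^ 2) (fun t ω => by positivity) T).trans horb
    have hF₀ : 0 ≤ f x₁ - f lowbd := sub_nonneg.2 (hlow _)
    rw [← ENNReal.ofReal_natCast, ← ENNReal.ofReal_mul hT'.le,
      ← ENNReal.ofReal_add hF₀ (by positivity),
      ENNReal.ofReal_le_ofReal_iff (by positivity)] at h1
    simp only [integral_const_mul] at h1
    rw [← Finset.mul_sum] at h1
    set gradSum := ∑ t ∈ Finset.range T, ∫ ω, ‖gradient f (x t ω)‖ ^ 2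
              ∂(Measure.pi fun _ : Fin T => Measure.pi fun _ : Fin b => P)
    have hs : 0 < Real.sqrt b := Real.sqrt_pos.2 hb'
    calc c * ((T : ℝ)⁻¹ * gradSum) = η * αl * c * gradSum / (T * η * αl) := by field_simp
      _ ≤ (f x₁ - f lowbd + T * (η * K)) / (T * η * αl) := by gcongr
      _ = _ := by rw [hK]; field_simp; ring
  · intro y hy
    have hmd := fun j => mean_dev P (fun s => gradient (fun z => ℓ z s) y.1 j)
      (by have := hgradmeas y.1; fun_prop) G (fun s => hGbd y.1 s j) (σt j) (hσt j)
      (gradient f y.1 j)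
      (by
        rw [hgrad]
        exact ((EuclideanSpace.proj (𝕜 := ℝ) j).integral_comp_comm (hgradint y.1)).symm)
      (hvar y.1 j) b hb
    refine expected_descent (Measure.pi fun _ : Fin b => P)
      (fun w => f (lambStep blk gr φ β₂ η y w).1 - f lowbd) (fun w => sub_nonneg.2 (hlow _))
      (f y.1 - f lowbd) (sub_nonneg.2 (hlow _)) (gradient f y.1) (gr y.1)
      (fun j => φ (blockNorm blk (blk j) y.1)) αl αu c η (Real.sqrt b)
      (αu ^ 2 * (∑ i, L i) / 2) σt
      (fun j => (hφ _ (blockNorm_nonneg _ _ _)).1) hαl.le hαu hc0 hη.le hK0 ?_ ?_ ?_ ?_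
    · intro j; simp only [hgr]; exact (hmd j).1
    · intro j; simp only [hgr]; exact (hmd j).2.1
    · intro j; simp only [hgr]; exact (hmd j).2.2
    · intro w
      have := step_descent blk f hfdiff L hL0 hsmoothf (fun i => φ (blockNorm blk i y.1)) αu
        (fun i => ⟨hαl.le.trans (hφ _ (blockNorm_nonneg _ _ _)).1,
          (hφ _ (blockNorm_nonneg _ _ _)).2⟩)
        G β₂ ((d / h : ℕ) : ℝ) c η hβ₂1 hβ₂0 hη hc0 (fun i => by rw [hcard i]) hcD
        y.1 (lambStep blk gr φ β₂ η y w).1 (gr y.1 w)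
        (WithLp.toLp 2 fun j => gr y.1 w j /
          Real.sqrt (β₂ * y.2 j + (1 - β₂) * gr y.1 w j ^ 2))
        y.2 (lambStep blk gr φ β₂ η y w).2 (fun j => (hy j).1) (fun j => (hvG y hy w j).2)
        (fun j => rfl) (fun j => rfl) (fun j => rfl)
      linarith
  · intro j
    simp only [Pi.zero_apply]
    exact ⟨le_rfl, by positivity⟩
  · intro ω
    exact Prod.ext (hx0 ω) (funext fun j => hv0 ω j)
  · intro t ω
    have hgt : g t ω = gr (x t ω) (ω t) := hg t ω
    have hv' : v ((t : ℕ) + 1) ω = (lambStep blk gr φ β₂ η (x t ω, v t ω) (ω t)).2 := by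
      funext j
      rw [hvrec, hgt]
      rfl
    have hr' : r t ω = WithLp.toLp 2 fun j => gr (x t ω) (ω t) j /
          Real.sqrt (β₂ * v t ω j + (1 - β₂) * gr (x t ω) (ω t) j ^ 2) := by
      ext j
      rw [hr, hvrec, hgt]
    refine Prod.ext ?_ hv'
    ext j
    change x ((t : ℕ) + 1) ω j = _
    rw [hupd, hr']
    rfl
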